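/- Suppose n ≥ 3, k ≥ 2, the partition is balanced, E ∈ ℝ^{V×V} is any symmetric matrix with ‖E‖₂ ≤ μ/(100·log n), and Ĝ := G + E. Then for every x ∈ ℝ^V: (1/2)·‖P_{Ĝ_k} x‖ ≤ ‖φ(Ĝ) x‖ ≤ (3/2)·‖P_{Ĝ_k} x‖ + ‖x‖·n^{−log log n}, and (1/2)·‖P_{G_k} x‖ ≤ ‖φ(G) x‖ ≤ (3/2)·‖P_{G_k} x‖. -/

import Mathlib

open MeasureTheory ProbabilityTheory Matrix Finset

namespace SBM

/-- Euclidean norm of a vector. -/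
noncomputable def enorm {m : Type*} [Fintype m] (x : m → ℝ) : ℝ :=
  Real.sqrt (∑ i, x i ^ 2)

/-- Spectral (ℓ²-operator) norm of a matrix. -/
noncomputable def specNorm {n : ℕ} (A : Matrix (Fin n) (Fin n) ℝ) : ℝ :=
  ‖Matrix.toEuclideanCLM (𝕜 := ℝ) A‖

/-- The `2 → ∞` norm: maximal Euclidean norm of a row. -/
noncomputable def n2i {n : ℕ} (A : Matrix (Fin n) (Fin n) ℝ) : ℝ :=
  ⨆ i : Fin n, enorm (A i)

/-- The mean matrix `G` of the SSBM with cluster assignment `cl`. -/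
def meanMatrix (n k : ℕ) (p q : ℝ) (cl : Fin n → Fin k) : Matrix (Fin n) (Fin n) ℝ :=
  Matrix.of fun u v => if cl u = cl v then p else q

/-- The size of cluster `i`. -/
def clusterSize {n k : ℕ} (cl : Fin n → Fin k) (i : Fin k) : ℕ :=
  (Finset.univ.filter fun v => cl v = i).card

/-- The partition is balanced: every cluster size is within a `1 ± 1/(16 log n)` factor
of `n / k`. -/
noncomputable def Balanced (n k : ℕ) (cl : Fin n → Fin k) : Prop :=
  ∀ i : Fin k,
    (1 - 1 / (16 * Real.log n)) * ((n : ℝ) / k) ≤ (clusterSize cl i : ℝ) ∧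
    (clusterSize cl i : ℝ) ≤ (1 + 1 / (16 * Real.log n)) * ((n : ℝ) / k)

/-- `lam, v` is a spectral decomposition of `A`: eigenvalues in non-increasing order with
an orthonormal eigenbasis. -/
def IsSpectralDecomp {n : ℕ} (A : Matrix (Fin n) (Fin n) ℝ)
    (lam : Fin n → ℝ) (v : Fin n → Fin n → ℝ) : Prop :=
  Antitone lam ∧
  (∀ i j, dotProduct (v i) (v j) = if i = j then (1 : ℝ) else 0) ∧
  A = ∑ i, lam i • Matrix.vecMulVec (v i) (v i)

/-- Orthogonal projection onto the span of the top `k` eigenvectors `v 0, …, v (k-1)`. -/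
noncomputable def projTop {n : ℕ} (k : ℕ) (v : Fin n → Fin n → ℝ) :
    Matrix (Fin n) (Fin n) ℝ :=
  ∑ i ∈ Finset.univ.filter (fun i : Fin n => (i : ℕ) < k), Matrix.vecMulVec (v i) (v i)

/-- The column of `A` indexed by `u`. -/
def column {n : ℕ} (A : Matrix (Fin n) (Fin n) ℝ) (u : Fin n) : Fin n → ℝ :=
  fun i => A i u

/-- `ψ(M) = A·M² + B·M` where `A = -1/(λ₁μ)`, `B = 1/λ₁ + 1/μ`. -/
noncomputable def psiM {n : ℕ} (lam1 mu : ℝ) (M : Matrix (Fin n) (Fin n) ℝ) :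
    Matrix (Fin n) (Fin n) ℝ :=
  (-(1 / (lam1 * mu))) • (M * M) + (1 / lam1 + 1 / mu) • M

/-- `φ(M) = ψ(M)^r`. -/
noncomputable def phiM {n : ℕ} (lam1 mu : ℝ) (r : ℕ) (M : Matrix (Fin n) (Fin n) ℝ) :
    Matrix (Fin n) (Fin n) ℝ :=
  psiM lam1 mu M ^ r

/-- `ψ(t) = A·t² + B·t` where `A = -1/(λ₁μ)`, `B = 1/λ₁ + 1/μ`. -/
noncomputable def psiR (lam1 mu t : ℝ) : ℝ :=
  (-(1 / (lam1 * mu))) * t ^ 2 + (1 / lam1 + 1 / mu) * t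

/-- `φ(t) = ψ(t)^r`. -/
noncomputable def phiR (lam1 mu : ℝ) (r : ℕ) (t : ℝ) : ℝ := psiR lam1 mu t ^ r

end SBM

namespace SBM

lemma enorm_sq' {m : Type*} [Fintype m] (x : m → ℝ) : enorm x ^ 2 = x ⬝ᵥ x := by
  unfold enorm
  rw [Real.sq_sqrt (Finset.sum_nonneg fun i _ => sq_nonneg _)]
  simp [dotProduct, sq]

lemma enorm_nonneg' {m : Type*} [Fintype m] (x : m → ℝ) : 0 ≤ enorm x := Real.sqrt_nonneg _

lemma le_of_sq_le_sq_aux {a b : ℝ} (h : a ^ 2 ≤ b ^ 2) (hb : 0 ≤ b) : a ≤ b :=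
  abs_le_of_sq_le_sq' h hb |>.2

section decomp
variable {n : ℕ} {A : Matrix (Fin n) (Fin n) ℝ} {lam : Fin n → ℝ} {v : Fin n → Fin n → ℝ}

lemma parseval (h : IsSpectralDecomp A lam v) (x y : Fin n → ℝ) :
    x ⬝ᵥ y = ∑ i, (v i ⬝ᵥ x) * (v i ⬝ᵥ y) := by
  let W : Matrix (Fin n) (Fin n) ℝ := Matrix.of v
  have h1 : W * Wᵀ = 1 := by
    ext i j
    rw [Matrix.mul_apply, Matrix.one_apply, ← h.2.1 i j]
    rfl
  have h2 : Wᵀ * W = 1 := mul_eq_one_comm.mp h1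
  have : (W *ᵥ x) ⬝ᵥ (W *ᵥ y) = x ⬝ᵥ y := by
    rw [Matrix.dotProduct_mulVec, ← Matrix.mulVec_transpose, Matrix.mulVec_mulVec, h2,
      Matrix.one_mulVec]
  rw [← this]
  rfl

lemma coord_mul (h : IsSpectralDecomp A lam v) (i : Fin n) (x : Fin n → ℝ) :
    v i ⬝ᵥ (A *ᵥ x) = lam i * (v i ⬝ᵥ x) := by
  conv_lhs => rw [h.2.2]
  rw [Matrix.sum_mulVec, dotProduct_sum]
  simp only [Matrix.smul_mulVec, Matrix.vecMulVec_mulVec, dotProduct_smul, h.2.1]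
  rw [Finset.sum_eq_single i]
  · simp
  · intro j _ hj
    simp [Ne.symm hj]
  · simp

lemma quad_eq (h : IsSpectralDecomp A lam v) (x : Fin n → ℝ) :
    x ⬝ᵥ (A *ᵥ x) = ∑ i, lam i * (v i ⬝ᵥ x) ^ 2 := by
  rw [parseval h]
  refine Finset.sum_congr rfl fun i _ => ?_
  rw [coord_mul h]; ring

lemma norm_eq (h : IsSpectralDecomp A lam v) (x : Fin n → ℝ) :
    x ⬝ᵥ x = ∑ i, (v i ⬝ᵥ x) ^ 2 := by
  rw [parseval h]
  refine Finset.sum_congr rfl fun i _ => ?_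
  ring

lemma coord_psi (h : IsSpectralDecomp A lam v) (l m : ℝ) (i : Fin n) (x : Fin n → ℝ) :
    v i ⬝ᵥ (psiM l m A *ᵥ x) = psiR l m (lam i) * (v i ⬝ᵥ x) := by
  unfold psiM psiR
  rw [Matrix.add_mulVec, Matrix.smul_mulVec, Matrix.smul_mulVec, dotProduct_add,
    dotProduct_smul, dotProduct_smul, ← Matrix.mulVec_mulVec, coord_mul h, coord_mul h]
  simp only [smul_eq_mul]
  ring

lemma coord_phi (h : IsSpectralDecomp A lam v) (l m : ℝ) (r : ℕ) (i : Fin n) (x : Fin n → ℝ) :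
    v i ⬝ᵥ (phiM l m r A *ᵥ x) = psiR l m (lam i) ^ r * (v i ⬝ᵥ x) := by
  unfold phiM
  induction r with
  | zero => simp
  | succ r ih =>
    rw [pow_succ', ← Matrix.mulVec_mulVec, coord_psi h, ih]; ring

lemma coord_proj (h : IsSpectralDecomp A lam v) (k : ℕ) (i : Fin n) (x : Fin n → ℝ) :
    v i ⬝ᵥ (projTop k v *ᵥ x) = if (i : ℕ) < k then v i ⬝ᵥ x else 0 := by
  unfold projTop
  rw [Matrix.sum_mulVec, dotProduct_sum, Finset.sum_filter]
  rw [Finset.sum_eq_single i]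
  · simp [Matrix.vecMulVec_mulVec, h.2.1]
  · intro j _ hj
    simp [Matrix.vecMulVec_mulVec, h.2.1, Ne.symm hj]
  · simp

lemma approx (h : IsSpectralDecomp A lam v) (k : ℕ) (l m : ℝ) (r : ℕ) (η : ℝ) (hη : 0 ≤ η)
    (h1 : ∀ i : Fin n, (i : ℕ) < k → 1 / 2 ≤ psiR l m (lam i) ^ r ∧ psiR l m (lam i) ^ r ≤ 3 / 2)
    (h2 : ∀ i : Fin n, k ≤ (i : ℕ) → |psiR l m (lam i) ^ r| ≤ η) (x : Fin n → ℝ) :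
    (1 / 2) * enorm (projTop k v *ᵥ x) ≤ enorm (phiM l m r A *ᵥ x) ∧
    enorm (phiM l m r A *ᵥ x) ≤ (3 / 2) * enorm (projTop k v *ᵥ x) + enorm x * η := by
  have e1 : enorm (projTop k v *ᵥ x) ^ 2 = ∑ i : Fin n, (if (i : ℕ) < k then v i ⬝ᵥ x else 0) ^ 2 := by
    rw [enorm_sq', norm_eq h]; simp only [coord_proj h]
  have e2 : enorm (phiM l m r A *ᵥ x) ^ 2 = ∑ i, (psiR l m (lam i) ^ r * (v i ⬝ᵥ x)) ^ 2 := by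
    rw [enorm_sq', norm_eq h]; simp only [coord_phi h]
  have e3 : enorm x ^ 2 = ∑ i, (v i ⬝ᵥ x) ^ 2 := by rw [enorm_sq', norm_eq h]
  have n1 := enorm_nonneg' (projTop k v *ᵥ x)
  have n2 := enorm_nonneg' (phiM l m r A *ᵥ x)
  have n3 := enorm_nonneg' x
  constructor
  · refine le_of_sq_le_sq_aux ?_ n2
    rw [mul_pow, e1, e2, Finset.mul_sum]
    refine Finset.sum_le_sum fun i _ => ?_
    split_ifs with hi
    · rw [mul_pow (_ ^ r)]
      have := h1 i hi
      gcongr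
      exact this.1
    · simp only [ne_eq, OfNat.ofNat_ne_zero, not_false_eq_true, zero_pow, mul_zero]
      positivity
  · have key : enorm (phiM l m r A *ᵥ x) ^ 2 ≤
        (3 / 2) ^ 2 * enorm (projTop k v *ᵥ x) ^ 2 + η ^ 2 * enorm x ^ 2 := by
      rw [e1, e2, e3, Finset.mul_sum, Finset.mul_sum, ← Finset.sum_add_distrib]
      refine Finset.sum_le_sum fun i _ => ?_
      rw [mul_pow (_ ^ r)]
      split_ifs with hi
      · have := h1 i hi
        have h3 : (psiR l m (lam i) ^ r) ^ 2 ≤ (3 / 2) ^ 2 := by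
          have := this.1
          have := this
          gcongr
          exact (h1 i hi).2
        have := mul_le_mul_of_nonneg_right h3 (sq_nonneg (v i ⬝ᵥ x))
        have : 0 ≤ η ^ 2 * (v i ⬝ᵥ x) ^ 2 := by positivity
        linarith
      · have h3 : (psiR l m (lam i) ^ r) ^ 2 ≤ η ^ 2 :=
          sq_le_sq' (abs_le.mp (h2 i (not_lt.mp hi))).1 (abs_le.mp (h2 i (not_lt.mp hi))).2
        have := mul_le_mul_of_nonneg_right h3 (sq_nonneg (v i ⬝ᵥ x))
        linarith
    refine le_of_sq_le_sq_aux ?_ (by positivity)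
    have : 0 ≤ enorm (projTop k v *ᵥ x) * (enorm x * η) := by positivity
    nlinarith

/-- Courant–Fischer, upper direction. -/
lemma lam_le (h : IsSpectralDecomp A lam v) (i : Fin n) (m : ℕ) (hm : m ≤ i)
    (f : (Fin n → ℝ) →ₗ[ℝ] (Fin m → ℝ)) (c : ℝ)
    (hf : ∀ x, f x = 0 → x ⬝ᵥ (A *ᵥ x) ≤ c * (x ⬝ᵥ x)) : lam i ≤ c := by
  -- first `i+1` coordinates
  let g : (Fin (i + 1) → ℝ) →ₗ[ℝ] (Fin n → ℝ) :=
    ∑ j : Fin (i + 1), (LinearMap.proj j : (Fin (i + 1) → ℝ) →ₗ[ℝ] ℝ).smulRight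
      (v ⟨j, by omega⟩)
  have hg : ∀ a, g a = ∑ j : Fin (i + 1), a j • v ⟨j, by omega⟩ := by
    intro a; simp [g]
  have hk : LinearMap.ker (f ∘ₗ g) ≠ ⊥ := by
    apply LinearMap.ker_ne_bot_of_finrank_lt
    simp; omega
  obtain ⟨a, ha, ha0⟩ := (Submodule.ne_bot_iff _).mp hk
  have hc1 : ∀ j : Fin (i + 1), v ⟨j, by omega⟩ ⬝ᵥ g a = a j := by
    intro j
    rw [hg, dotProduct_sum, Finset.sum_eq_single j]
    · simp [h.2.1]
    · intro b _ hb
      have : ¬ ((j : ℕ) = b) := fun h => hb (Fin.ext h.symm)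
      simp [h.2.1, this]
    · simp
  have hc2 : ∀ j : Fin n, ¬ j ≤ i → v j ⬝ᵥ g a = 0 := by
    intro j hj
    rw [hg, dotProduct_sum]
    refine Finset.sum_eq_zero fun b _ => ?_
    have : ¬ (j = ⟨b, by omega⟩) := by
      intro hh; apply hj; rw [hh, Fin.le_def]; simp; omega
    simp [h.2.1, this]
  have hq := hf (g a) (by simpa using ha)
  have hpos : 0 < g a ⬝ᵥ g a := by
    have hne : g a ≠ 0 := by
      intro h0
      apply ha0
      ext j
      rw [← hc1 j, h0]; simp
    have : 0 ≤ g a ⬝ᵥ g a := by rw [norm_eq h]; positivity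
    refine lt_of_le_of_ne this fun h0 => hne (dotProduct_self_eq_zero.mp h0.symm)
  have hl : lam i * (g a ⬝ᵥ g a) ≤ g a ⬝ᵥ (A *ᵥ g a) := by
    rw [quad_eq h, norm_eq h, Finset.mul_sum]
    refine Finset.sum_le_sum fun j _ => ?_
    by_cases hj : j ≤ i
    · exact mul_le_mul_of_nonneg_right (h.1 hj) (sq_nonneg _)
    · simp [hc2 j hj]
  exact le_of_mul_le_mul_right (hl.trans hq) hpos

lemma quad_le_of_orth (h : IsSpectralDecomp A lam v) (i : Fin n) (x : Fin n → ℝ)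
    (hx : ∀ j < i, v j ⬝ᵥ x = 0) : x ⬝ᵥ (A *ᵥ x) ≤ lam i * (x ⬝ᵥ x) := by
  rw [quad_eq h, norm_eq h, Finset.mul_sum]
  refine Finset.sum_le_sum fun j _ => ?_
  by_cases hj : j < i
  · simp [hx j hj]
  · exact mul_le_mul_of_nonneg_right (h.1 (not_lt.mp hj)) (sq_nonneg _)

/-- The first `i` coordinates. -/
def coords (v : Fin n → Fin n → ℝ) (i : Fin n) : (Fin n → ℝ) →ₗ[ℝ] (Fin (i : ℕ) → ℝ) :=
  Matrix.mulVecLin (Matrix.of fun j : Fin (i : ℕ) => v ⟨j, by omega⟩)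

lemma coords_zero {i : Fin n} {x : Fin n → ℝ} (hx : coords v i x = 0) :
    ∀ j < i, v j ⬝ᵥ x = 0 := by
  intro j hj
  exact congrFun hx ⟨j, hj⟩

/-- Courant–Fischer, lower direction. -/
lemma le_lam (h : IsSpectralDecomp A lam v) (i : Fin n) (m : ℕ) (hm : i < m)
    (g : (Fin m → ℝ) →ₗ[ℝ] (Fin n → ℝ)) (hg : ∀ a, g a = 0 → a = 0) (c : ℝ)
    (hf : ∀ a, c * (g a ⬝ᵥ g a) ≤ g a ⬝ᵥ (A *ᵥ g a)) : c ≤ lam i := by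
  have hk : LinearMap.ker (coords v i ∘ₗ g) ≠ ⊥ := by
    apply LinearMap.ker_ne_bot_of_finrank_lt
    simpa using hm
  obtain ⟨a, ha, ha0⟩ := (Submodule.ne_bot_iff _).mp hk
  have h1 := quad_le_of_orth h i (g a) (coords_zero (by simpa using ha))
  have hpos : 0 < g a ⬝ᵥ g a := by
    have hne : g a ≠ 0 := fun h0 => ha0 (hg a h0)
    have : 0 ≤ g a ⬝ᵥ g a := by rw [norm_eq h]; positivity
    refine lt_of_le_of_ne this fun h0 => hne (dotProduct_self_eq_zero.mp h0.symm)
  exact le_of_mul_le_mul_right ((hf a).trans h1) hpos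

lemma weyl_le {B : Matrix (Fin n) (Fin n) ℝ} {lamB : Fin n → ℝ} {w : Fin n → Fin n → ℝ}
    (h : IsSpectralDecomp A lam v) (hB : IsSpectralDecomp B lamB w) (ε : ℝ)
    (hε : ∀ x, x ⬝ᵥ (B *ᵥ x) ≤ x ⬝ᵥ (A *ᵥ x) + ε * (x ⬝ᵥ x)) (i : Fin n) :
    lamB i ≤ lam i + ε := by
  refine lam_le hB i i le_rfl (coords v i) _ fun x hx => ?_
  have := quad_le_of_orth h i x (coords_zero hx)
  linarith [hε x]

end decomp

lemma spec_quad {n : ℕ} (E : Matrix (Fin n) (Fin n) ℝ) (x : Fin n → ℝ) :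
    |x ⬝ᵥ (E *ᵥ x)| ≤ specNorm E * (x ⬝ᵥ x) := by
  have h1 : x ⬝ᵥ (E *ᵥ x) =
      inner ℝ (Matrix.toEuclideanCLM (𝕜 := ℝ) E (WithLp.toLp 2 x)) (WithLp.toLp 2 x) := by
    simp [EuclideanSpace.inner_eq_star_dotProduct]
  have h2 : x ⬝ᵥ x = ‖WithLp.toLp 2 x‖ ^ 2 := by
    rw [EuclideanSpace.norm_sq_eq]; simp [dotProduct, sq]
  rw [h1, h2]
  refine (abs_real_inner_le_norm _ _).trans ?_
  have := (Matrix.toEuclideanCLM (𝕜 := ℝ) E).le_opNorm (WithLp.toLp 2 x)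
  unfold specNorm
  rw [sq, ← mul_assoc]
  exact mul_le_mul_of_nonneg_right this (norm_nonneg _)

section mean
variable {n k : ℕ} (cl : Fin n → Fin k)

/-- Sum of `x` over the clusters. -/
def csum : (Fin n → ℝ) →ₗ[ℝ] (Fin k → ℝ) :=
  Matrix.mulVecLin (Matrix.of fun c u => if cl u = c then (1 : ℝ) else 0)

lemma csum_apply (x : Fin n → ℝ) (c : Fin k) :
    csum cl x c = ∑ u with cl u = c, x u := by
  simp [csum, Matrix.mulVec, dotProduct, Finset.sum_filter]

lemma sum_csum (x : Fin n → ℝ) : ∑ c, csum cl x c = ∑ u, x u := by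
  simp only [csum_apply]
  exact Finset.sum_fiberwise _ _ _

lemma quad_mean (p q : ℝ) (x : Fin n → ℝ) :
    x ⬝ᵥ (meanMatrix n k p q cl *ᵥ x) =
      (p - q) * ∑ c, csum cl x c ^ 2 + q * (∑ u, x u) ^ 2 := by
  have h1 : ∀ u, (meanMatrix n k p q cl *ᵥ x) u = (p - q) * csum cl x (cl u) + q * ∑ w, x w := by
    intro u
    rw [csum_apply, Finset.sum_filter, Finset.mul_sum, Finset.mul_sum, ← Finset.sum_add_distrib]
    simp only [Matrix.mulVec, dotProduct]
    refine Finset.sum_congr rfl fun w _ => ?_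
    by_cases hh : cl u = cl w
    · simp [meanMatrix, hh]; ring
    · simp [meanMatrix, hh, Ne.symm hh]
  have h2 : ∑ c, csum cl x c ^ 2 = ∑ u, x u * csum cl x (cl u) := by
    rw [← Finset.sum_fiberwise Finset.univ cl (fun u => x u * csum cl x (cl u))]
    refine Finset.sum_congr rfl fun c _ => ?_
    rw [sq]
    nth_rewrite 1 [csum_apply]
    rw [Finset.sum_mul]
    refine Finset.sum_congr rfl fun u hu => ?_
    rw [(Finset.mem_filter.mp hu).2]
  simp only [dotProduct, h1, h2]
  generalize hS : ∑ w, x w = S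
  have h3 : q * S ^ 2 = ∑ u, x u * (q * S) := by
    rw [← Finset.sum_mul, hS]; ring
  rw [h3, Finset.mul_sum, ← Finset.sum_add_distrib]
  refine Finset.sum_congr rfl fun u _ => ?_
  ring

lemma sum_csum_sq_le (x : Fin n → ℝ) (M : ℝ) (hM : ∀ c, (clusterSize cl c : ℝ) ≤ M) :
    ∑ c, csum cl x c ^ 2 ≤ M * (x ⬝ᵥ x) := by
  have : x ⬝ᵥ x = ∑ c, ∑ u with cl u = c, x u ^ 2 := by
    rw [Finset.sum_fiberwise]; simp [dotProduct, sq]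
  rw [this, Finset.mul_sum]
  refine Finset.sum_le_sum fun c _ => ?_
  rw [csum_apply]
  refine sq_sum_le_card_mul_sum_sq.trans ?_
  exact mul_le_mul_of_nonneg_right (hM c) (Finset.sum_nonneg fun _ _ => sq_nonneg _)

/-- Cluster-constant vectors. -/
def lift : (Fin k → ℝ) →ₗ[ℝ] (Fin n → ℝ) := LinearMap.funLeft ℝ ℝ cl

lemma csum_lift (a : Fin k → ℝ) (c : Fin k) : csum cl (lift cl a) c = clusterSize cl c * a c := by
  rw [csum_apply, clusterSize, ← nsmul_eq_mul, ← Finset.sum_const]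
  refine Finset.sum_congr rfl fun u hu => ?_
  simp [lift, LinearMap.funLeft_apply, (Finset.mem_filter.mp hu).2]

lemma lift_sq (a : Fin k → ℝ) : lift cl a ⬝ᵥ lift cl a = ∑ c, clusterSize cl c * a c ^ 2 := by
  have : lift cl a ⬝ᵥ lift cl a = ∑ c, ∑ u with cl u = c, lift cl a u ^ 2 := by
    rw [Finset.sum_fiberwise]; simp [dotProduct, sq]
  rw [this]
  refine Finset.sum_congr rfl fun c _ => ?_
  rw [clusterSize, ← nsmul_eq_mul, ← Finset.sum_const]
  refine Finset.sum_congr rfl fun u hu => ?_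
  simp [lift, LinearMap.funLeft_apply, (Finset.mem_filter.mp hu).2]

variable {p q : ℝ} {lam : Fin n → ℝ} {v : Fin n → Fin n → ℝ}

lemma mean_nonneg (hq : 0 ≤ q) (hpq : q < p)
    (h : IsSpectralDecomp (meanMatrix n k p q cl) lam v) (i : Fin n) : 0 ≤ lam i := by
  have h1 : v i ⬝ᵥ (meanMatrix n k p q cl *ᵥ v i) = lam i := by
    rw [coord_mul h, h.2.1]; simp
  rw [← h1, quad_mean]
  have : 0 < p - q := sub_pos.mpr hpq
  positivity

lemma mean_zero (hq : 0 ≤ q) (hpq : q < p)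
    (h : IsSpectralDecomp (meanMatrix n k p q cl) lam v) (i : Fin n) (hi : k ≤ i) : lam i = 0 := by
  refine le_antisymm ?_ (mean_nonneg cl hq hpq h i)
  refine lam_le h i k hi (csum cl) 0 fun x hx => ?_
  rw [quad_mean, ← sum_csum cl, hx]
  simp

lemma mean_le (hpq : q < p)
    (h : IsSpectralDecomp (meanMatrix n k p q cl) lam v) (i : Fin n) (hi : 1 ≤ (i : ℕ))
    (M : ℝ) (hM : ∀ c, (clusterSize cl c : ℝ) ≤ M) : lam i ≤ (p - q) * M := by
  refine lam_le h i 1 hi (Matrix.mulVecLin (Matrix.of fun _ _ => (1 : ℝ))) _ fun x hx => ?_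
  have : ∑ u, x u = 0 := by
    have := congrFun hx 0
    simpa [Matrix.mulVec, dotProduct] using this
  rw [quad_mean, this, mul_assoc]
  have := mul_le_mul_of_nonneg_left (sum_csum_sq_le cl x M hM) (sub_nonneg.mpr hpq.le)
  simpa using this

lemma le_mean (hq : 0 ≤ q) (hpq : q < p)
    (h : IsSpectralDecomp (meanMatrix n k p q cl) lam v) (i : Fin n) (hi : (i : ℕ) < k)
    (m : ℝ) (hm0 : 0 < m) (hm : ∀ c, m ≤ (clusterSize cl c : ℝ)) : (p - q) * m ≤ lam i := by
  refine le_lam h i k hi (lift cl) ?_ _ fun a => ?_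
  · intro a ha
    have h1 := lift_sq cl a
    rw [ha] at h1
    simp only [dotProduct_zero] at h1
    have h2 := (Finset.sum_eq_zero_iff_of_nonneg (fun c _ => by positivity)).mp h1.symm
    ext c
    have h3 := h2 c (Finset.mem_univ _)
    have h4 := hm0.trans_le (hm c)
    simpa [h4.ne'] using h3
  · rw [quad_mean, lift_sq, mul_assoc]
    simp only [csum_lift]
    have h1 : m * ∑ c, (clusterSize cl c : ℝ) * a c ^ 2 ≤
        ∑ c, ((clusterSize cl c : ℝ) * a c) ^ 2 := by
      rw [Finset.mul_sum]
      refine Finset.sum_le_sum fun c _ => ?_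
      have := mul_le_mul_of_nonneg_right (hm c)
        (show 0 ≤ (clusterSize cl c : ℝ) * a c ^ 2 by positivity)
      nlinarith
    have h2 := mul_le_mul_of_nonneg_left h1 (sub_nonneg.mpr hpq.le)
    have : 0 ≤ q * (∑ u, lift cl a u) ^ 2 := by positivity
    linarith

end mean

section scalar

lemma pow_bounds (s L : ℝ) (hL : 1 ≤ L) (r : ℕ) (hr : (r : ℝ) ≤ 2 * L)
    (hs : |s - 1| ≤ 0.08 / L) : 1 / 2 ≤ s ^ r ∧ s ^ r ≤ 3 / 2 := by
  have hL0 : 0 < L := by linarith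
  obtain ⟨h1, h2⟩ := abs_le.mp hs
  have h3 : (r : ℝ) * (0.08 / L) ≤ 0.16 := by
    have : (r : ℝ) * (0.08 / L) ≤ (2 * L) * (0.08 / L) := by gcongr
    have e : (2 * L) * (0.08 / L) = 0.16 := by field_simp; norm_num
    linarith
  have h4 : 0.08 / L ≤ 0.08 := div_le_self (by norm_num) hL
  constructor
  · have := one_add_mul_le_pow (a := s - 1) (by linarith) r
    rw [add_sub_cancel] at this
    have h5 : (r : ℝ) * (-(0.08 / L)) ≤ r * (s - 1) := by gcongr
    norm_num at *
    linarith
  · have h5 : s ≤ Real.exp (0.08 / L) := by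
      have := Real.add_one_le_exp (0.08 / L); linarith
    have h6 : s ^ r ≤ Real.exp (0.08 / L) ^ r := by
      have : 0 ≤ s := by norm_num at *; linarith
      gcongr
    rw [← Real.exp_nat_mul] at h6
    have h7 : Real.exp (r * (0.08 / L)) ≤ Real.exp 0.16 := Real.exp_le_exp.mpr h3
    have h8 := Real.add_one_le_exp (-0.16 : ℝ)
    have h9 : Real.exp (0.16 : ℝ) * Real.exp (-0.16) = 1 := by rw [← Real.exp_add]; simp
    have h10 := Real.exp_pos (0.16 : ℝ)
    have h11 : Real.exp (0.16 : ℝ) ≤ 3 / 2 := by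
      norm_num at h8 h9 h10 ⊢
      nlinarith
    exact h6.trans (h7.trans h11)

lemma psi_sub_one (l m t : ℝ) (hl : l ≠ 0) (hm : m ≠ 0) :
    psiR l m t - 1 = -((t - l) * (t - m)) / (l * m) := by
  unfold psiR; field_simp; ring

/-- near `λ₁` -/
lemma psi_top (l m t L : ℝ) (hL : 1 ≤ L) (hm : 0 < m) (hl : (1 - 1 / (16 * L)) * m ≤ l)
    (ht : |t - l| ≤ m / (100 * L)) : |psiR l m t - 1| ≤ 0.08 / L := by
  have hL0 : 0 < L := by linarith
  have i1 : 1 / L ≤ 1 := by rw [div_le_one hL0]; exact hL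
  have i0 : 0 < 1 / L := by positivity
  have e1 : 1 / (16 * L) = (1 / L) / 16 := by field_simp
  have e2 : m / (100 * L) = m * (1 / L) / 100 := by field_simp
  have e3 : 0.08 / L = 0.08 * (1 / L) := by field_simp
  rw [e1] at hl
  rw [e2] at ht
  rw [e3]
  generalize 1 / L = d at *
  have hl2 : 15 / 16 * m ≤ l := by nlinarith
  have hl0 : 0 < l := by nlinarith
  rw [psi_sub_one _ _ _ hl0.ne' hm.ne', abs_div, abs_neg, abs_mul, abs_of_pos (mul_pos hl0 hm),
    div_le_iff₀ (mul_pos hl0 hm)]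
  have hmd : m * d ≤ m := by nlinarith
  have h2 : |t - m| ≤ 2 * l := by
    obtain ⟨a, b⟩ := abs_le.mp ht
    rw [abs_le]; constructor <;> linarith
  calc |t - l| * |t - m| ≤ (m * d / 100) * (2 * l) := by gcongr
    _ ≤ _ := by nlinarith [mul_pos (mul_pos hl0 hm) i0]

lemma psi_mid (l m t L : ℝ) (hL : 1 ≤ L) (hm : 0 < m) (hl : (1 - 1 / (16 * L)) * m ≤ l)
    (ht : t ≤ l + m / (100 * L)) (h1 : (1 - 1 / (16 * L)) * m - m / (100 * L) ≤ t)
    (h2 : t ≤ (1 + 1 / (16 * L)) * m + m / (100 * L)) : |psiR l m t - 1| ≤ 0.08 / L := by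
  have hL0 : 0 < L := by linarith
  have i1 : 1 / L ≤ 1 := by rw [div_le_one hL0]; exact hL
  have i0 : 0 < 1 / L := by positivity
  have e1 : 1 / (16 * L) = (1 / L) / 16 := by field_simp
  have e2 : m / (100 * L) = m * (1 / L) / 100 := by field_simp
  have e3 : 0.08 / L = 0.08 * (1 / L) := by field_simp
  rw [e1] at hl h1 h2
  rw [e2] at ht h1 h2
  rw [e3]
  generalize 1 / L = d at *
  have hl2 : 15 / 16 * m ≤ l := by nlinarith
  have hl0 : 0 < l := by nlinarith
  rw [psi_sub_one _ _ _ hl0.ne' hm.ne', abs_div, abs_neg, abs_mul, abs_of_pos (mul_pos hl0 hm),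
    div_le_iff₀ (mul_pos hl0 hm)]
  have hmd : m * d ≤ m := by nlinarith
  have h3 : |t - m| ≤ 0.0725 * (m * d) := by
    rw [abs_le]; norm_num; constructor <;> linarith
  have h4 : |t - l| ≤ l := by
    rw [abs_le]; constructor <;> linarith
  calc |t - l| * |t - m| ≤ l * (0.0725 * (m * d)) := by gcongr
    _ ≤ _ := by norm_num; nlinarith [mul_pos (mul_pos hl0 hm) i0]

lemma psi_small (l m t L : ℝ) (hL : 1 ≤ L) (hm : 0 < m) (hl : (1 - 1 / (16 * L)) * m ≤ l)
    (ht : |t| ≤ m / (100 * L)) : |psiR l m t| ≤ 1 / L := by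
  have hL0 : 0 < L := by linarith
  have i1 : 1 / L ≤ 1 := by rw [div_le_one hL0]; exact hL
  have i0 : 0 < 1 / L := by positivity
  have e1 : 1 / (16 * L) = (1 / L) / 16 := by field_simp
  have e2 : m / (100 * L) = m * (1 / L) / 100 := by field_simp
  rw [e1] at hl
  rw [e2] at ht
  generalize 1 / L = d at *
  have hl2 : 15 / 16 * m ≤ l := by nlinarith
  have hl0 : 0 < l := by nlinarith
  have e : psiR l m t = t * (l + m - t) / (l * m) := by
    unfold psiR; field_simp; ring
  rw [e, abs_div, abs_mul, abs_of_pos (mul_pos hl0 hm), div_le_iff₀ (mul_pos hl0 hm)]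
  have hmd : m * d ≤ m := by nlinarith
  have h4 : |l + m - t| ≤ 3 * l := by
    obtain ⟨a, b⟩ := abs_le.mp ht
    rw [abs_le]; constructor <;> linarith
  calc |t| * |l + m - t| ≤ (m * d / 100) * (3 * l) := by gcongr
    _ ≤ _ := by nlinarith [mul_pos (mul_pos hl0 hm) i0]

end scalar

end SBM

open SBM in
/-- Polynomial approximation of the projections. Suppose `n ≥ 3`, `k ≥ 2`,
the partition is balanced, `E` is symmetric with `‖E‖₂ ≤ μ/(100 log n)` and `Ĝ = G + E`.
Then for every `x`:
`(1/2)‖P_{Ĝ_k}x‖ ≤ ‖φ(Ĝ)x‖ ≤ (3/2)‖P_{Ĝ_k}x‖ + ‖x‖·n^{−log log n}` and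
`(1/2)‖P_{G_k}x‖ ≤ ‖φ(G)x‖ ≤ (3/2)‖P_{G_k}x‖`. -/
theorem poly_approximates_projection (n k : ℕ) (hn : 3 ≤ n) (hk : 2 ≤ k)
    (p q : ℝ) (hq : 0 ≤ q) (hpq : q < p) (hp : p ≤ 1)
    (cl : Fin n → Fin k) (hbal : Balanced n k cl)
    (E : Matrix (Fin n) (Fin n) ℝ) (hE : E.IsSymm)
    (hEnorm : specNorm E ≤ (p - q) * ((n : ℝ) / k) / (100 * Real.log n))
    (lamG : Fin n → ℝ) (vG : Fin n → Fin n → ℝ)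
    (hdecG : IsSpectralDecomp (meanMatrix n k p q cl) lamG vG)
    (lamH : Fin n → ℝ) (vH : Fin n → Fin n → ℝ)
    (hdecH : IsSpectralDecomp (meanMatrix n k p q cl + E) lamH vH) :
    ∀ x : Fin n → ℝ,
      (1 / 2) * SBM.enorm ((projTop k vH).mulVec x) ≤
          SBM.enorm ((phiM (lamG ⟨0, by omega⟩) ((p - q) * ((n : ℝ) / k)) ⌈Real.log n⌉₊
            (meanMatrix n k p q cl + E)).mulVec x) ∧
      SBM.enorm ((phiM (lamG ⟨0, by omega⟩) ((p - q) * ((n : ℝ) / k)) ⌈Real.log n⌉₊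
            (meanMatrix n k p q cl + E)).mulVec x) ≤
          (3 / 2) * SBM.enorm ((projTop k vH).mulVec x) +
            SBM.enorm x * (n : ℝ) ^ (-Real.log (Real.log n)) ∧
      (1 / 2) * SBM.enorm ((projTop k vG).mulVec x) ≤
          SBM.enorm ((phiM (lamG ⟨0, by omega⟩) ((p - q) * ((n : ℝ) / k)) ⌈Real.log n⌉₊
            (meanMatrix n k p q cl)).mulVec x) ∧
      SBM.enorm ((phiM (lamG ⟨0, by omega⟩) ((p - q) * ((n : ℝ) / k)) ⌈Real.log n⌉₊
            (meanMatrix n k p q cl)).mulVec x) ≤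
          (3 / 2) * SBM.enorm ((projTop k vG).mulVec x) := by
  have hn3 : (3 : ℝ) ≤ n := by exact_mod_cast hn
  have hL : 1 ≤ Real.log n := by
    rw [Real.le_log_iff_exp_le (by linarith)]
    linarith [Real.exp_one_lt_d9]
  have hL0 : 0 < Real.log n := by linarith
  have hr1 : Real.log n ≤ ⌈Real.log n⌉₊ := Nat.le_ceil _
  have hr2 : (⌈Real.log n⌉₊ : ℝ) ≤ 2 * Real.log n := by
    have := Nat.ceil_lt_add_one hL0.le
    linarith
  have hr0 : ⌈Real.log n⌉₊ ≠ 0 := (Nat.ceil_pos.mpr hL0).ne'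
  have hkpos : (0 : ℝ) < k := by exact_mod_cast (by omega : 0 < k)
  have hnk : 0 < (n : ℝ) / k := by positivity
  have hmu : 0 < (p - q) * ((n : ℝ) / k) := mul_pos (sub_pos.mpr hpq) hnk
  have hd : 1 / (16 * Real.log n) ≤ 1 / 16 := by
    apply one_div_le_one_div_of_le <;> linarith
  have hs0 : 0 < (1 - 1 / (16 * Real.log n)) * ((n : ℝ) / k) := mul_pos (by linarith) hnk
  have hlow : ∀ i : Fin n, (i : ℕ) < k →
      (1 - 1 / (16 * Real.log n)) * ((p - q) * ((n : ℝ) / k)) ≤ lamG i := by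
    intro i hi
    have := le_mean cl hq hpq hdecG i hi _ hs0 (fun c => (hbal c).1)
    linarith
  have hup : ∀ i : Fin n, 1 ≤ (i : ℕ) →
      lamG i ≤ (1 + 1 / (16 * Real.log n)) * ((p - q) * ((n : ℝ) / k)) := by
    intro i hi
    have := mean_le cl hpq hdecG i hi _ (fun c => (hbal c).2)
    linarith
  have hzero := mean_zero cl hq hpq hdecG
  have hl := hlow ⟨0, by omega⟩ (by simp; omega)
  have hmono : ∀ i, lamG i ≤ lamG ⟨0, by omega⟩ := fun i => hdecG.1 (by simp [Fin.le_def])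
  generalize hmueq : (p - q) * ((n : ℝ) / k) = mu at *
  have heps : 0 < mu / (100 * Real.log n) := by positivity
  have gen : ∀ lam : Fin n → ℝ, (∀ i, |lam i - lamG i| ≤ mu / (100 * Real.log n)) →
      ∀ i : Fin n, (i : ℕ) < k → 1 / 2 ≤ psiR (lamG ⟨0, by omega⟩) mu (lam i) ^ ⌈Real.log n⌉₊ ∧
        psiR (lamG ⟨0, by omega⟩) mu (lam i) ^ ⌈Real.log n⌉₊ ≤ 3 / 2 := by
    intro lam hlam i hi
    refine pow_bounds _ _ hL _ hr2 ?_
    have hli := hlam i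
    by_cases h0 : (i : ℕ) = 0
    · have : i = ⟨0, by omega⟩ := Fin.ext h0
      refine psi_top _ _ _ _ hL hmu hl ?_
      rw [this] at hli ⊢
      exact hli
    · obtain ⟨a, b⟩ := abs_le.mp hli
      have := hlow i hi
      have := hup i (by omega)
      have := hmono i
      refine psi_mid _ _ _ _ hL hmu hl ?_ ?_ ?_ <;> linarith
  have hW : ∀ i, |lamH i - lamG i| ≤ mu / (100 * Real.log n) := by
    intro i
    have hq : ∀ x : Fin n → ℝ, |x ⬝ᵥ (E *ᵥ x)| ≤ mu / (100 * Real.log n) * (x ⬝ᵥ x) := by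
      intro x
      refine (spec_quad E x).trans (mul_le_mul_of_nonneg_right hEnorm ?_)
      rw [← enorm_sq']; positivity
    rw [abs_le]
    constructor
    · have := weyl_le hdecH hdecG (mu / (100 * Real.log n)) (fun x => by
        rw [Matrix.add_mulVec, dotProduct_add]
        linarith [(abs_le.mp (hq x)).1]) i
      linarith
    · have := weyl_le hdecG hdecH (mu / (100 * Real.log n)) (fun x => by
        rw [Matrix.add_mulVec, dotProduct_add]
        linarith [(abs_le.mp (hq x)).2]) i
      linarith
  have hη : ∀ i : Fin n, k ≤ (i : ℕ) →
      |psiR (lamG ⟨0, by omega⟩) mu (lamH i) ^ ⌈Real.log n⌉₊| ≤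
        (n : ℝ) ^ (-Real.log (Real.log n)) := by
    intro i hi
    have h1 := hW i
    rw [hzero i hi, sub_zero] at h1
    have h2 := psi_small _ _ _ _ hL hmu hl h1
    have e : (n : ℝ) ^ (-Real.log (Real.log n)) = (1 / Real.log n) ^ (Real.log n : ℝ) := by
      rw [Real.rpow_def_of_pos (by linarith), Real.rpow_def_of_pos (by positivity), one_div,
        Real.log_inv]
      ring_nf
    rw [abs_pow, e]
    calc |psiR (lamG ⟨0, by omega⟩) mu (lamH i)| ^ ⌈Real.log n⌉₊
        ≤ (1 / Real.log n) ^ ⌈Real.log n⌉₊ := by gcongr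
      _ = (1 / Real.log n) ^ ((⌈Real.log n⌉₊ : ℕ) : ℝ) := (Real.rpow_natCast _ _).symm
      _ ≤ _ := Real.rpow_le_rpow_of_exponent_ge (by positivity)
          (by rw [div_le_one hL0]; exact hL) hr1
  intro x
  have A1 := approx hdecH k (lamG ⟨0, by omega⟩) mu ⌈Real.log n⌉₊ _ (by positivity)
    (gen lamH hW) hη x
  have A2 := approx hdecG k (lamG ⟨0, by omega⟩) mu ⌈Real.log n⌉₊ 0 le_rfl
    (gen lamG (fun i => by simpa using heps.le)) (fun i hi => by
      rw [hzero i hi]; simp [psiR, hr0]) x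
  rw [mul_zero, add_zero] at A2
  exact ⟨A1.1, A1.2, A2.1, A2.2⟩
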